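/- arXiv:1403.1441 — 2 statements merged into one kernel-verified Lean document; each statement's English description precedes it below -/
import Mathlib

section
/- Let X = (X_1, X_2, …) be a sequence of ℝ^d-valued random vectors with partial sums S_n := X_1 + … + X_n, let A_n be invertible d×d real matrices with A_{n+1} A_n^{−1} → I, and let b_n ∈ ℝ^d; assume (i) X is strongly mixing, (ii) the triangular array (A_n X_j : 1 ≤ j ≤ n, n ≥ 1) is infinitesimal, and (iii) the distributions of A_n S_n + b_n converge weakly to a full probability measure μ on ℝ^d. Then for every nonzero idempotent matrix J ∈ D(μ) and every c with 0 < c < 1, there exists a matrix K_c ∈ D(μ) such that det_J K_c = c. -/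
open MeasureTheory Filter Topology Matrix

/-- Convolution of two Borel measures on `ℝ^d`. -/
noncomputable def mconv {d : ℕ} (μ ν : Measure (Fin d → ℝ)) : Measure (Fin d → ℝ) :=
  (μ.prod ν).map (fun p => p.1 + p.2)

/-- The Urbanik decomposability semigroup `D(μ)`: all matrices `A` such that
`μ = (A_*μ) ∗ ν` for some probability measure `ν`. -/
def UrbanikD {d : ℕ} (μ : Measure (Fin d → ℝ)) : Set (Matrix (Fin d) (Fin d) ℝ) :=
  {A | ∃ ν : Measure (Fin d → ℝ), IsProbabilityMeasure ν ∧ μ = mconv (μ.map A.mulVec) ν}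

/-- A measure on `ℝ^d` is full if its support is not contained in any hyperplane,
i.e. no translate `v + L` of a proper linear subspace `L` carries all of its mass. -/
def IsFull {d : ℕ} (μ : Measure (Fin d → ℝ)) : Prop :=
  ∀ (v : Fin d → ℝ) (L : Submodule ℝ (Fin d → ℝ)), L ≠ ⊤ → μ {x | x - v ∈ L} < 1

/-- Weak convergence of a sequence of measures on `ℝ^d`. -/
def WeakLim {d : ℕ} (μs : ℕ → Measure (Fin d → ℝ)) (μ : Measure (Fin d → ℝ)) : Prop :=
  ∀ f : BoundedContinuousFunction (Fin d → ℝ) ℝ,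
    Tendsto (fun n => ∫ x, f x ∂(μs n)) atTop (𝓝 (∫ x, f x ∂μ))

/-- Partial sums `S_n = X_1 + ... + X_n`. -/
def partialSum {Ω : Type*} {d : ℕ} (X : ℕ → Ω → (Fin d → ℝ)) (n : ℕ) (ω : Ω) :
    Fin d → ℝ :=
  ∑ j ∈ Finset.Icc 1 n, X j ω

/-- The triangular array `(A_n X_j : 1 ≤ j ≤ n, n ≥ 1)` is infinitesimal:
`sup_{1 ≤ j ≤ n} P(‖A_n X_j‖ ≥ ε) → 0` as `n → ∞`, for every `ε > 0`. -/
def Infinitesimal {Ω : Type*} [MeasurableSpace Ω] {d : ℕ} (P : Measure Ω)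
    (A : ℕ → Matrix (Fin d) (Fin d) ℝ) (X : ℕ → Ω → (Fin d → ℝ)) : Prop :=
  ∀ ε > (0 : ℝ), ∀ δ > (0 : ℝ), ∃ N : ℕ, ∀ n ≥ N, ∀ j : ℕ, 1 ≤ j → j ≤ n →
    (P {ω | ε ≤ ‖(A n).mulVec (X j ω)‖}).toReal < δ

/-- Rosenblatt's measure of dependence `α(𝒜, ℬ)` between two sub-σ-fields. -/
noncomputable def alphaSig {Ω : Type*} [MeasurableSpace Ω] (P : Measure Ω)
    (m₁ m₂ : MeasurableSpace Ω) : ℝ :=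
  sSup {r | ∃ A B : Set Ω, MeasurableSet[m₁] A ∧ MeasurableSet[m₂] B ∧
    r = |(P (A ∩ B)).toReal - (P A).toReal * (P B).toReal|}

/-- The strong mixing coefficient `α(X; n) = sup_{j ≥ 1} α(σ(X_k, 1 ≤ k ≤ j), σ(X_k, k ≥ j+n))`. -/
noncomputable def alphaMix {Ω : Type*} [MeasurableSpace Ω] {d : ℕ} (P : Measure Ω)
    (X : ℕ → Ω → (Fin d → ℝ)) (n : ℕ) : ℝ :=
  ⨆ j : {j : ℕ // 1 ≤ j}, alphaSig P
    (⨆ k ∈ Set.Icc 1 (j : ℕ), MeasurableSpace.comap (X k) inferInstance)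
    (⨆ k ∈ Set.Ici ((j : ℕ) + n), MeasurableSpace.comap (X k) inferInstance)

/-- The sequence `X = (X_1, X_2, ...)` is strongly mixing: `α(X; n) → 0`. -/
def StronglyMixing {Ω : Type*} [MeasurableSpace Ω] {d : ℕ} (P : Measure Ω)
    (X : ℕ → Ω → (Fin d → ℝ)) : Prop :=
  Tendsto (alphaMix P X) atTop (𝓝 0)

/-- `det_J A`: the determinant of the restriction of `J A J` to the subspace
`J(ℝ^d)` (the range of `J`), which `J A J` maps into itself. -/
noncomputable def detJ {d : ℕ} (J A : Matrix (Fin d) (Fin d) ℝ) : ℝ :=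
  LinearMap.det ((J * A * J).mulVecLin.restrict
    (p := LinearMap.range J.mulVecLin) (q := LinearMap.range J.mulVecLin)
    (fun x _ => ⟨(A * J).mulVecLin x, by
      simp [← Matrix.mulVecLin_mul, ← Matrix.mul_assoc]⟩))

/-- The point `exp (i a)` of the unit circle. -/
noncomputable def cis (a : ℝ) : ℂ := Complex.exp (a * Complex.I)

lemma norm_cis (a : ℝ) : ‖cis a‖ = 1 := Complex.norm_exp_ofReal_mul_I a

lemma cis_add (a b : ℝ) : cis (a + b) = cis a * cis b := by
  simp [cis, add_mul, Complex.exp_add]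

@[fun_prop]
lemma continuous_cis : Continuous cis := by unfold cis; fun_prop

lemma norm_cis_sub_one_le (a : ℝ) : ‖cis a - 1‖ ≤ min 2 |a| := by
  refine le_min ?_ ?_
  · calc ‖cis a - 1‖ ≤ ‖cis a‖ + ‖(1 : ℂ)‖ := norm_sub_le _ _
      _ = 2 := by rw [norm_cis, norm_one]; norm_num
  · simpa [cis, mul_comm] using Real.norm_exp_I_mul_ofReal_sub_one_le (x := a)

lemma norm_cis_sub_cis (a b : ℝ) : ‖cis a - cis b‖ = ‖cis (a - b) - 1‖ := by
  have h : cis a - cis b = (cis (a - b) - 1) * cis b := by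
    rw [sub_mul, ← cis_add, sub_add_cancel, one_mul]
  rw [h, norm_mul, norm_cis, mul_one]

lemma norm_cis_add_sub_one_le (a b : ℝ) :
    ‖cis (a + b) - 1‖ ≤ ‖cis a - 1‖ + ‖cis b - 1‖ := by
  have h : cis (a + b) - 1 = (cis a - 1) * cis b + (cis b - 1) := by rw [cis_add]; ring
  rw [h]
  refine (norm_add_le _ _).trans ?_
  rw [norm_mul, norm_cis, mul_one]

lemma norm_cis_sum_sub_one_le {ι : Type*} (s : Finset ι) (f : ι → ℝ) :
    ‖cis (∑ i ∈ s, f i) - 1‖ ≤ ∑ i ∈ s, ‖cis (f i) - 1‖ := by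
  classical
  induction s using Finset.induction_on with
  | empty => simp [cis]
  | insert a s ha ih =>
    rw [Finset.sum_insert ha, Finset.sum_insert ha]
    exact (norm_cis_add_sub_one_le _ _).trans (by gcongr)

lemma integrable_cis {α : Type*} [MeasurableSpace α] {Q : Measure α} [IsFiniteMeasure Q]
    {f : α → ℝ} (hf : Measurable f) : Integrable (fun x => cis (f x)) Q :=
  Integrable.of_bound (continuous_cis.measurable.comp hf).aestronglyMeasurable 1
    (Eventually.of_forall fun _ => (norm_cis _).le)

/-- The characteristic function of a measure on `ℝ^d`. -/
noncomputable def cf {d : ℕ} (μ : Measure (Fin d → ℝ)) (t : Fin d → ℝ) : ℂ :=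
  ∫ x, cis (t ⬝ᵥ x) ∂μ

@[fun_prop]
lemma measurable_dotProduct_left {d : ℕ} (t : Fin d → ℝ) :
    Measurable (fun x : Fin d → ℝ => t ⬝ᵥ x) := by
  unfold dotProduct; fun_prop

lemma measurable_mulVec {d : ℕ} (B : Matrix (Fin d) (Fin d) ℝ) : Measurable B.mulVec :=
  B.mulVecLin.continuous_of_finiteDimensional.measurable

lemma abs_dotProduct_le {d : ℕ} (t x : Fin d → ℝ) : |t ⬝ᵥ x| ≤ d * ‖t‖ * ‖x‖ := by
  unfold dotProduct
  refine (Finset.abs_sum_le_sum_abs _ _).trans ?_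
  have h : ∀ i ∈ Finset.univ, |t i * x i| ≤ ‖t‖ * ‖x‖ := fun i _ => by
    rw [abs_mul]
    exact mul_le_mul (norm_le_pi_norm t i) (norm_le_pi_norm x i) (abs_nonneg _) (norm_nonneg _)
  refine (Finset.sum_le_sum h).trans ?_
  simp [mul_assoc]

lemma norm_cf_le_one {d : ℕ} (μ : Measure (Fin d → ℝ)) [IsProbabilityMeasure μ]
    (t : Fin d → ℝ) : ‖cf μ t‖ ≤ 1 := by
  refine (norm_integral_le_of_norm_le_const (C := 1)
    (Eventually.of_forall fun _ => (norm_cis _).le)).trans ?_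
  simp

lemma cf_map {d : ℕ} {Ω : Type*} [MeasurableSpace Ω] (P : Measure Ω) {Y : Ω → Fin d → ℝ}
    (hY : Measurable Y) (t : Fin d → ℝ) : cf (P.map Y) t = ∫ ω, cis (t ⬝ᵥ Y ω) ∂P := by
  unfold cf
  rw [integral_map hY.aemeasurable]
  exact (continuous_cis.measurable.comp (measurable_dotProduct_left t)).aestronglyMeasurable

/-- The bounded continuous function `x ↦ min 2 (δ * ‖x‖)`. -/
noncomputable def minNorm (d : ℕ) (δ : ℝ) : BoundedContinuousFunction (Fin d → ℝ) ℝ :=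
  BoundedContinuousFunction.ofNormedAddCommGroup (fun x => min 2 (|δ| * ‖x‖)) (by fun_prop) 2
    (fun x => by
      rw [Real.norm_eq_abs, abs_of_nonneg (by positivity)]
      exact min_le_left _ _)

lemma minNorm_apply {d : ℕ} (δ : ℝ) (x : Fin d → ℝ) : minNorm d δ x = min 2 (|δ| * ‖x‖) := rfl

lemma tendsto_integral_minNorm {d : ℕ} (μ : Measure (Fin d → ℝ)) [IsProbabilityMeasure μ] :
    Tendsto (fun δ => ∫ x, minNorm d δ x ∂μ) (𝓝 0) (𝓝 0) := by
  have h0 : (0 : ℝ) = ∫ x : Fin d → ℝ, (0 : ℝ) ∂μ := by simp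
  conv => rhs; rw [h0]
  refine tendsto_integral_filter_of_dominated_convergence (fun _ => 2)
    (Eventually.of_forall fun δ => (minNorm d δ).continuous.aestronglyMeasurable)
    (Eventually.of_forall fun δ => Eventually.of_forall fun x => ?_) (integrable_const _)
    (Eventually.of_forall fun x => ?_)
  · rw [minNorm_apply, Real.norm_eq_abs, abs_of_nonneg (by positivity)]
    exact min_le_left _ _
  · have : Continuous fun δ : ℝ => min 2 (|δ| * ‖x‖) := by fun_prop
    simpa [minNorm_apply] using this.tendsto 0

lemma norm_cf_sub_cf_le {d : ℕ} (μ : Measure (Fin d → ℝ)) [IsProbabilityMeasure μ]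
    (s t : Fin d → ℝ) {δ : ℝ} (h : d * ‖s - t‖ ≤ δ) :
    ‖cf μ s - cf μ t‖ ≤ ∫ x, minNorm d δ x ∂μ := by
  unfold cf
  rw [← integral_sub (integrable_cis (measurable_dotProduct_left s))
    (integrable_cis (measurable_dotProduct_left t))]
  refine norm_integral_le_of_norm_le (BoundedContinuousFunction.integrable _ _)
    (Eventually.of_forall fun x => ?_)
  rw [norm_cis_sub_cis, minNorm_apply]
  refine (norm_cis_sub_one_le _).trans ?_
  refine min_le_min le_rfl ?_
  rw [← sub_dotProduct]
  refine (abs_dotProduct_le _ _).trans ?_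
  gcongr
  exact h.trans (le_abs_self δ)

lemma tendsto_cf_of_tendsto {d : ℕ} {ι : Type*} {l : Filter ι}
    {μs : ι → ProbabilityMeasure (Fin d → ℝ)} {μ : ProbabilityMeasure (Fin d → ℝ)}
    (h : Tendsto μs l (𝓝 μ)) (t : Fin d → ℝ) :
    Tendsto (fun k => cf (μs k) t) l (𝓝 (cf μ t)) := by
  refine (ProbabilityMeasure.tendsto_iff_forall_integral_rclike_tendsto ℂ).1 h
    (BoundedContinuousFunction.ofNormedAddCommGroup (fun x => cis (t ⬝ᵥ x)) ?_ 1
    (fun _ => (norm_cis _).le))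
  unfold dotProduct; fun_prop

lemma WeakLim.tendsto_probabilityMeasure {d : ℕ} {μs : ℕ → Measure (Fin d → ℝ)}
    {μ : Measure (Fin d → ℝ)} [∀ k, IsProbabilityMeasure (μs k)] [IsProbabilityMeasure μ]
    (h : WeakLim μs μ) :
    Tendsto (β := ProbabilityMeasure (Fin d → ℝ)) (fun k => ⟨μs k, inferInstance⟩) atTop
      (nhds (X := ProbabilityMeasure (Fin d → ℝ)) ⟨μ, inferInstance⟩) :=
  ProbabilityMeasure.tendsto_iff_forall_integral_tendsto.2 h

/-- Along a weakly convergent sequence, characteristic functions converge continuously. -/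
lemma WeakLim.tendsto_cf {d : ℕ} {μs : ℕ → Measure (Fin d → ℝ)}
    {μ : Measure (Fin d → ℝ)} [∀ k, IsProbabilityMeasure (μs k)] [IsProbabilityMeasure μ]
    (h : WeakLim μs μ) {t : ℕ → Fin d → ℝ} {t₀ : Fin d → ℝ} (ht : Tendsto t atTop (𝓝 t₀)) :
    Tendsto (fun k => cf (μs k) (t k)) atTop (𝓝 (cf μ t₀)) := by
  have hd : Tendsto (fun k => cf (μs k) (t k) - cf (μs k) t₀) atTop (𝓝 0) := by
    rw [Metric.tendsto_nhds]
    intro ε hε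
    obtain ⟨δ, hδ, hδpos⟩ : ∃ δ : ℝ, ∫ x, minNorm d δ x ∂μ < ε ∧ 0 < δ :=
      (((((tendsto_integral_minNorm μ).eventually_lt_const hε)).filter_mono
        (nhdsWithin_le_nhds (s := Set.Ioi 0))).and self_mem_nhdsWithin).exists
    have hs : Tendsto (fun k => (d : ℝ) * ‖t k - t₀‖) atTop (𝓝 0) := by
      simpa using ((tendsto_iff_norm_sub_tendsto_zero.1 ht).const_mul (d : ℝ))
    filter_upwards [(h (minNorm d δ)).eventually_lt_const hδ,
      hs.eventually_lt_const hδpos] with k hk1 hk2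
    rw [dist_zero_right]
    exact (norm_cf_sub_cf_le _ _ _ hk2.le).trans_lt hk1
  simpa using hd.add (tendsto_cf_of_tendsto h.tendsto_probabilityMeasure t₀)

lemma WeakLim.comp {d : ℕ} {μs : ℕ → Measure (Fin d → ℝ)} {μ : Measure (Fin d → ℝ)}
    (h : WeakLim μs μ) {φ : ℕ → ℕ} (hφ : Tendsto φ atTop atTop) :
    WeakLim (fun k => μs (φ k)) μ := fun f => (h f).comp hφ

lemma eq_zero_of_forall_cis_eq_one {a : ℝ}
    (h : ∀ n : ℕ, cis (1 / ((n : ℝ) + 1) * a) = 1) : a = 0 := by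
  obtain ⟨n, hn⟩ := exists_nat_gt |a|
  obtain ⟨k, hk⟩ := Complex.exp_eq_one_iff.1 (h n)
  have hk' : 1 / ((n : ℝ) + 1) * a = k * (2 * Real.pi) := by
    generalize 1 / ((n : ℝ) + 1) * a = c at hk ⊢
    simpa using congrArg Complex.im hk
  have hn0 : (0 : ℝ) < (n : ℝ) + 1 := by positivity
  have hlt : |(k : ℝ) * (2 * Real.pi)| < 1 := by
    rw [← hk', abs_mul, abs_of_pos (by positivity), one_div, inv_mul_lt_iff₀ hn0]
    linarith
  have hk0 : k = 0 := by
    by_contra hne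
    have h1 : (1 : ℝ) ≤ |(k : ℝ)| := by exact_mod_cast Int.one_le_abs hne
    rw [abs_mul, abs_of_pos Real.two_pi_pos] at hlt
    nlinarith [Real.pi_gt_three]
  rw [hk0, Int.cast_zero, zero_mul] at hk'
  exact (mul_eq_zero.1 hk').resolve_left (by positivity)

/-- A full measure is nondegenerate in every direction. -/
lemma IsFull.exists_norm_cf_ne_one {d : ℕ} {μ : Measure (Fin d → ℝ)} [IsProbabilityMeasure μ]
    (hμ : IsFull μ) {v : Fin d → ℝ} (hv : v ≠ 0) : ∃ r : ℝ, ‖cf μ (r • v)‖ ≠ 1 := by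
  by_contra! hcon
  have hconst : ∀ n : ℕ, ∃ z : ℂ, ∀ᵐ x ∂μ, cis (((1 / ((n : ℝ) + 1)) • v) ⬝ᵥ x) = z := fun n => by
    rcases ae_eq_const_or_norm_integral_lt_of_norm_le_const (μ := μ) (C := 1)
      (f := fun x => cis (((1 / ((n : ℝ) + 1)) • v) ⬝ᵥ x))
      (Eventually.of_forall fun _ => (norm_cis _).le) with h | h
    · exact ⟨_, h⟩
    · exact absurd (hcon (1 / ((n : ℝ) + 1))) (by simpa [cf] using h.ne)
  choose z hz using hconst
  have hall := ae_all_iff.2 hz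
  obtain ⟨x₀, hx₀⟩ := hall.exists
  let L : Submodule ℝ (Fin d → ℝ) := LinearMap.ker (dotProductBilin ℝ ℝ v)
  have hL : L ≠ ⊤ := by
    intro htop
    have : v ∈ L := htop ▸ Submodule.mem_top
    exact hv (dotProduct_self_eq_zero.1 (by simpa [L] using this))
  refine (hμ x₀ L hL).ne ?_
  refine (measure_congr (eventuallyEq_univ.2 ?_)).trans measure_univ
  filter_upwards [hall] with x hx
  change v ⬝ᵥ (x - x₀) = 0
  refine eq_zero_of_forall_cis_eq_one fun n => ?_
  have h := norm_cis_sub_cis (((1 / ((n : ℝ) + 1)) • v) ⬝ᵥ x) (((1 / ((n : ℝ) + 1)) • v) ⬝ᵥ x₀)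
  rw [hx n, hx₀ n, sub_self, norm_zero, ← dotProduct_sub, smul_dotProduct, smul_eq_mul] at h
  exact sub_eq_zero.1 (norm_eq_zero.1 h.symm)

/-- Unit directions along a weakly convergent sequence with nondegenerate limit cannot be
asymptotically degenerate. -/
lemma WeakLim.false_of_tendsto_norm_cf_one {d : ℕ} {ρs : ℕ → Measure (Fin d → ℝ)}
    {ρ : Measure (Fin d → ℝ)} [∀ k, IsProbabilityMeasure (ρs k)] [IsProbabilityMeasure ρ]
    (h : WeakLim ρs ρ) (hρ : ∀ v : Fin d → ℝ, v ≠ 0 → ∃ r : ℝ, ‖cf ρ (r • v)‖ ≠ 1)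
    {u : ℕ → Fin d → ℝ} (hu : ∀ k, ‖u k‖ = 1)
    (hlim : ∀ r : ℝ, Tendsto (fun k => ‖cf (ρs k) (r • u k)‖) atTop (𝓝 1)) : False := by
  obtain ⟨v, hv, φ, hφ, hlimφ⟩ := (isCompact_sphere (0 : Fin d → ℝ) 1).tendsto_subseq
    (x := u) (fun k => by simpa using hu k)
  obtain ⟨r, hr⟩ := hρ v (by rintro rfl; simp at hv)
  refine hr (tendsto_nhds_unique (((h.comp hφ.tendsto_atTop).tendsto_cf
    (hlimφ.const_smul r)).norm) ((hlim r).comp hφ.tendsto_atTop))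

lemma measureReal_sub_mul_abs_le_one {Ω : Type*} [MeasurableSpace Ω] (P : Measure Ω)
    [IsProbabilityMeasure P] (A B : Set Ω) :
    |(P (A ∩ B)).toReal - (P A).toReal * (P B).toReal| ≤ 1 := by
  have h1 : (P (A ∩ B)).toReal ≤ 1 := measureReal_le_one
  have h2 : (P A).toReal ≤ 1 := measureReal_le_one
  have h3 : (P B).toReal ≤ 1 := measureReal_le_one
  have h4 : 0 ≤ (P (A ∩ B)).toReal := ENNReal.toReal_nonneg
  have h5 : 0 ≤ (P A).toReal := ENNReal.toReal_nonneg
  have h6 : 0 ≤ (P B).toReal := ENNReal.toReal_nonneg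
  rw [abs_le]
  constructor <;> nlinarith

lemma abs_sub_mul_le_alphaSig {Ω : Type*} {m₁ m₂ : MeasurableSpace Ω} [MeasurableSpace Ω]
    (P : Measure Ω) [IsProbabilityMeasure P] {A B : Set Ω}
    (hA : MeasurableSet[m₁] A) (hB : MeasurableSet[m₂] B) :
    |P.real (A ∩ B) - P.real A * P.real B| ≤ alphaSig P m₁ m₂ := by
  refine le_csSup ⟨1, ?_⟩ ⟨A, B, hA, hB, rfl⟩
  rintro r ⟨A, B, -, -, rfl⟩
  exact measureReal_sub_mul_abs_le_one P A B

lemma alphaSig_le_one {Ω : Type*} (m₁ m₂ : MeasurableSpace Ω) [MeasurableSpace Ω]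
    (P : Measure Ω) [IsProbabilityMeasure P] : alphaSig P m₁ m₂ ≤ 1 := by
  refine csSup_le ⟨_, ∅, ∅, @MeasurableSet.empty _ m₁, @MeasurableSet.empty _ m₂, rfl⟩ ?_
  rintro r ⟨A, B, -, -, rfl⟩
  exact measureReal_sub_mul_abs_le_one P A B

lemma alphaSig_le_alphaMix {Ω : Type*} [MeasurableSpace Ω] {d : ℕ} (P : Measure Ω)
    [IsProbabilityMeasure P] (X : ℕ → Ω → (Fin d → ℝ)) (n : ℕ) {j : ℕ} (hj : 1 ≤ j) :
    alphaSig P (⨆ k ∈ Set.Icc 1 j, MeasurableSpace.comap (X k) inferInstance)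
      (⨆ k ∈ Set.Ici (j + n), MeasurableSpace.comap (X k) inferInstance) ≤ alphaMix P X n := by
  refine le_ciSup (f := fun j : {j : ℕ // 1 ≤ j} => alphaSig P
    (⨆ k ∈ Set.Icc 1 (j : ℕ), MeasurableSpace.comap (X k) inferInstance)
    (⨆ k ∈ Set.Ici ((j : ℕ) + n), MeasurableSpace.comap (X k) inferInstance)) ⟨1, ?_⟩ ⟨j, hj⟩
  rintro _ ⟨j, rfl⟩
  exact alphaSig_le_one _ _ _

/-- Two finite measures that are `a`-close on a sub-σ-field have `a`-close integrals of
`[0, 1]`-valued functions measurable with respect to it. -/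
lemma abs_integral_sub_integral_le {Ω : Type*} {m : MeasurableSpace Ω} [mΩ : MeasurableSpace Ω]
    {Q₁ Q₂ : Measure Ω} [IsFiniteMeasure Q₁] [IsFiniteMeasure Q₂] (hm : m ≤ mΩ) {a : ℝ}
    (hQ : ∀ B, MeasurableSet[m] B → |Q₁.real B - Q₂.real B| ≤ a)
    {h : Ω → ℝ} (hh : Measurable[m] h) (h0 : ∀ ω, 0 ≤ h ω) (h1 : ∀ ω, h ω ≤ 1) :
    |∫ ω, h ω ∂Q₁ - ∫ ω, h ω ∂Q₂| ≤ a := by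
  have hh' : Measurable h := hh.mono hm le_rfl
  have hfInt : ∀ Q : Measure Ω, IsFiniteMeasure Q → Integrable h Q := fun Q _ =>
    Integrable.of_bound hh'.aestronglyMeasurable 1 (Eventually.of_forall fun ω => by
      rw [Real.norm_eq_abs, abs_of_nonneg (h0 ω)]; exact h1 ω)
  have hlevel : ∀ Q : Measure Ω, IsFiniteMeasure Q →
      IntegrableOn (fun t => Q.real {ω | t ≤ h ω}) (Set.Ioc 0 1) := fun Q _ => by
    have hanti : Antitone (fun t => Q.real {ω | t ≤ h ω}) := fun s t hst =>
      measureReal_mono (fun ω (hω : t ≤ h ω) => hst.trans hω)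
    exact ((hanti.antitoneOn _).integrableOn_isCompact isCompact_Icc).mono_set
      Set.Ioc_subset_Icc_self
  rw [(hfInt Q₁ ‹_›).integral_eq_integral_Ioc_meas_le (M := 1) (Eventually.of_forall h0)
      (Eventually.of_forall h1),
    (hfInt Q₂ ‹_›).integral_eq_integral_Ioc_meas_le (M := 1) (Eventually.of_forall h0)
      (Eventually.of_forall h1),
    ← integral_sub (hlevel Q₁ ‹_›) (hlevel Q₂ ‹_›), ← Real.norm_eq_abs]
  refine (norm_setIntegral_le_of_norm_le_const (C := a) (by simp)
    fun t _ => hQ _ (measurableSet_le (mδ := m) measurable_const hh)).trans ?_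
  simp

/-- Covariance inequality for `[0, 1]`-valued functions. -/
lemma abs_integral_mul_sub_le_of_unit {Ω : Type*} {m₁ m₂ : MeasurableSpace Ω}
    [mΩ : MeasurableSpace Ω] (P : Measure Ω)
    [IsProbabilityMeasure P] (hm₁ : m₁ ≤ mΩ) (hm₂ : m₂ ≤ mΩ)
    {f h : Ω → ℝ} (hf : Measurable[m₁] f) (hh : Measurable[m₂] h)
    (hf0 : ∀ ω, 0 ≤ f ω) (hf1 : ∀ ω, f ω ≤ 1) (hh0 : ∀ ω, 0 ≤ h ω) (hh1 : ∀ ω, h ω ≤ 1) :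
    |∫ ω, f ω * h ω ∂P - (∫ ω, f ω ∂P) * ∫ ω, h ω ∂P| ≤ alphaSig P m₁ m₂ := by
  have hf' : Measurable f := hf.mono hm₁ le_rfl
  have hh' : Measurable h := hh.mono hm₂ le_rfl
  have hfin : ∀ c : ENNReal, c ≠ ⊤ → IsFiniteMeasure (c • P) := fun c hc => P.smul_finite hc
  have hset : ∀ A, MeasurableSet[m₁] A →
      |∫ ω in A, h ω ∂P - P.real A * ∫ ω, h ω ∂P| ≤ alphaSig P m₁ m₂ := fun A hA => by
    have := hfin (P A) (measure_ne_top P A)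
    have := abs_integral_sub_integral_le (Q₁ := P.restrict A) (Q₂ := P A • P) hm₂
      (a := alphaSig P m₁ m₂) (fun B hB => by
        rw [measureReal_restrict_apply (hm₂ B hB), measureReal_ennreal_smul_apply, Set.inter_comm]
        exact abs_sub_mul_le_alphaSig P hA hB) hh hh0 hh1
    rwa [integral_smul_measure, smul_eq_mul] at this
  have hhInt : Integrable h P := Integrable.of_bound hh'.aestronglyMeasurable 1
    (Eventually.of_forall fun ω => by
      rw [Real.norm_eq_abs, abs_of_nonneg (hh0 ω)]; exact hh1 ω)
  let Q₁ : Measure Ω := P.withDensity fun ω => ENNReal.ofReal (h ω)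
  have : IsFiniteMeasure Q₁ := isFiniteMeasure_withDensity_ofReal hhInt.2
  have hQ₁ : ∀ A, MeasurableSet A → Q₁.real A = ∫ ω in A, h ω ∂P := fun A hA => by
    rw [measureReal_def, withDensity_apply _ hA, integral_eq_lintegral_of_nonneg_ae
      (Eventually.of_forall hh0) hh'.aestronglyMeasurable]
  have := hfin _ (ENNReal.ofReal_ne_top (r := ∫ ω, h ω ∂P))
  have key := abs_integral_sub_integral_le (Q₁ := Q₁)
    (Q₂ := ENNReal.ofReal (∫ ω, h ω ∂P) • P) hm₁
    (a := alphaSig P m₁ m₂) (fun A hA => by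
      rw [hQ₁ A (hm₁ A hA), measureReal_ennreal_smul_apply,
        ENNReal.toReal_ofReal (integral_nonneg hh0), mul_comm]
      exact hset A hA) hf hf0 hf1
  rw [integral_smul_measure, ENNReal.toReal_ofReal (integral_nonneg hh0), smul_eq_mul,
    integral_withDensity_eq_integral_toReal_smul hh'.ennreal_ofReal
      (Eventually.of_forall fun _ => ENNReal.ofReal_lt_top)] at key
  simp only [ENNReal.toReal_ofReal (hh0 _), smul_eq_mul] at key
  simpa only [mul_comm] using key

/-- Covariance inequality for `[-1, 1]`-valued functions. -/
lemma abs_integral_mul_sub_le {Ω : Type*} {m₁ m₂ : MeasurableSpace Ω}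
    [mΩ : MeasurableSpace Ω] (P : Measure Ω)
    [IsProbabilityMeasure P] (hm₁ : m₁ ≤ mΩ) (hm₂ : m₂ ≤ mΩ)
    {f h : Ω → ℝ} (hf : Measurable[m₁] f) (hh : Measurable[m₂] h)
    (hf1 : ∀ ω, |f ω| ≤ 1) (hh1 : ∀ ω, |h ω| ≤ 1) :
    |∫ ω, f ω * h ω ∂P - (∫ ω, f ω ∂P) * ∫ ω, h ω ∂P| ≤ 4 * alphaSig P m₁ m₂ := by
  have hf' : Measurable f := hf.mono hm₁ le_rfl
  have hh' : Measurable h := hh.mono hm₂ le_rfl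
  have hfi : Integrable f P := Integrable.of_bound hf'.aestronglyMeasurable 1
    (Eventually.of_forall hf1)
  have hhi : Integrable h P := Integrable.of_bound hh'.aestronglyMeasurable 1
    (Eventually.of_forall hh1)
  have hfhi : Integrable (fun ω => f ω * h ω) P :=
    Integrable.of_bound (hf'.mul hh').aestronglyMeasurable 1 (Eventually.of_forall fun ω => by
      rw [norm_mul]; exact mul_le_one₀ (hf1 ω) (norm_nonneg _) (hh1 ω))
  have key := abs_integral_mul_sub_le_of_unit P hm₁ hm₂
    (f := fun ω => 2⁻¹ * (f ω + 1)) (h := fun ω => 2⁻¹ * (h ω + 1))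
    (Measurable.const_mul (hf.add_const 1) _) (Measurable.const_mul (hh.add_const 1) _)
    (fun ω => by linarith [(abs_le.1 (hf1 ω)).1]) (fun ω => by linarith [(abs_le.1 (hf1 ω)).2])
    (fun ω => by linarith [(abs_le.1 (hh1 ω)).1]) (fun ω => by linarith [(abs_le.1 (hh1 ω)).2])
  have e1 : ∀ {g : Ω → ℝ}, Integrable g P →
      ∫ ω, 2⁻¹ * (g ω + 1) ∂P = 2⁻¹ * (∫ ω, g ω ∂P + 1) := fun hg => by
    rw [integral_const_mul, integral_add hg (integrable_const _)]; simp
  have e2 : ∫ ω, 2⁻¹ * (f ω + 1) * (2⁻¹ * (h ω + 1)) ∂P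
      = 4⁻¹ * (∫ ω, f ω * h ω ∂P + ∫ ω, f ω ∂P + (∫ ω, h ω ∂P + 1)) := by
    have : ∀ ω, 2⁻¹ * (f ω + 1) * (2⁻¹ * (h ω + 1))
        = 4⁻¹ * (f ω * h ω + f ω + (h ω + 1)) := fun ω => by ring
    simp only [this]
    rw [integral_const_mul, integral_add (f := fun ω => f ω * h ω + f ω) (g := fun ω => h ω + 1)
      (hfhi.add hfi) (hhi.add (integrable_const _)),
      integral_add hfhi hfi, integral_add hhi (integrable_const _)]
    simp
  rw [e1 hfi, e1 hhi, e2] at key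
  have : 4⁻¹ * (∫ ω, f ω * h ω ∂P + ∫ ω, f ω ∂P + (∫ ω, h ω ∂P + 1))
      - 2⁻¹ * (∫ ω, f ω ∂P + 1) * (2⁻¹ * (∫ ω, h ω ∂P + 1))
      = 4⁻¹ * (∫ ω, f ω * h ω ∂P - (∫ ω, f ω ∂P) * ∫ ω, h ω ∂P) := by ring
  rw [this, abs_mul, abs_of_pos (by norm_num)] at key
  linarith

/-- Covariance inequality for characters. -/
lemma norm_integral_cis_mul_sub_le {Ω : Type*} {m₁ m₂ : MeasurableSpace Ω}
    [mΩ : MeasurableSpace Ω] (P : Measure Ω)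
    [IsProbabilityMeasure P] (hm₁ : m₁ ≤ mΩ) (hm₂ : m₂ ≤ mΩ)
    {f h : Ω → ℝ} (hf : Measurable[m₁] f) (hh : Measurable[m₂] h) :
    ‖∫ ω, cis (f ω) * cis (h ω) ∂P - (∫ ω, cis (f ω) ∂P) * ∫ ω, cis (h ω) ∂P‖
      ≤ 16 * alphaSig P m₁ m₂ := by
  have hf' : Measurable f := hf.mono hm₁ le_rfl
  have hh' : Measurable h := hh.mono hm₂ le_rfl
  have bd : ∀ {g : Ω → ℝ}, Measurable g → (∀ ω, |g ω| ≤ 1) → Integrable g P := fun hg h1 =>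
    Integrable.of_bound hg.aestronglyMeasurable 1 (Eventually.of_forall h1)
  have mul1 : ∀ x y : ℝ, |x| ≤ 1 → |y| ≤ 1 → |x * y| ≤ 1 := fun x y hx hy => by
    rw [abs_mul]; exact mul_le_one₀ hx (abs_nonneg _) hy
  have cov := fun (F H : ℝ → ℝ) (hF : Measurable F) (hH : Measurable H)
      (hF1 : ∀ x, |F x| ≤ 1) (hH1 : ∀ x, |H x| ≤ 1) =>
    abs_integral_mul_sub_le P hm₁ hm₂ (hF.comp hf) (hH.comp hh) (fun _ => hF1 _) (fun _ => hH1 _)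
  have ccc := cov Real.cos Real.cos Real.measurable_cos Real.measurable_cos
    Real.abs_cos_le_one Real.abs_cos_le_one
  have ccs := cov Real.cos Real.sin Real.measurable_cos Real.measurable_sin
    Real.abs_cos_le_one Real.abs_sin_le_one
  have csc := cov Real.sin Real.cos Real.measurable_sin Real.measurable_cos
    Real.abs_sin_le_one Real.abs_cos_le_one
  have css := cov Real.sin Real.sin Real.measurable_sin Real.measurable_sin
    Real.abs_sin_le_one Real.abs_sin_le_one
  simp only [Function.comp_apply] at ccc ccs csc css
  have re : ∀ a, (cis a).re = Real.cos a := fun a => by simp [cis, Complex.exp_ofReal_mul_I_re]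
  have im : ∀ a, (cis a).im = Real.sin a := fun a => by simp [cis, Complex.exp_ofReal_mul_I_im]
  have hic : ∀ {g : Ω → ℝ}, Measurable g → (∫ ω, cis (g ω) ∂P).re = ∫ ω, Real.cos (g ω) ∂P :=
    fun hg => by simpa [re] using (integral_re (integrable_cis (Q := P) hg)).symm
  have his : ∀ {g : Ω → ℝ}, Measurable g → (∫ ω, cis (g ω) ∂P).im = ∫ ω, Real.sin (g ω) ∂P :=
    fun hg => by simpa [im] using (integral_im (integrable_cis (Q := P) hg)).symm
  have hprod : ∫ ω, cis (f ω) * cis (h ω) ∂P = ∫ ω, cis (f ω + h ω) ∂P := by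
    simp [cis, add_mul, Complex.exp_add]
  have i1 : Integrable (fun ω => Real.cos (f ω) * Real.cos (h ω)) P :=
    bd (by fun_prop) fun ω => mul1 _ _ (Real.abs_cos_le_one _) (Real.abs_cos_le_one _)
  have i2 : Integrable (fun ω => Real.sin (f ω) * Real.sin (h ω)) P :=
    bd (by fun_prop) fun ω => mul1 _ _ (Real.abs_sin_le_one _) (Real.abs_sin_le_one _)
  have i3 : Integrable (fun ω => Real.sin (f ω) * Real.cos (h ω)) P :=
    bd (by fun_prop) fun ω => mul1 _ _ (Real.abs_sin_le_one _) (Real.abs_cos_le_one _)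
  have i4 : Integrable (fun ω => Real.cos (f ω) * Real.sin (h ω)) P :=
    bd (by fun_prop) fun ω => mul1 _ _ (Real.abs_cos_le_one _) (Real.abs_sin_le_one _)
  refine (Complex.norm_le_abs_re_add_abs_im _).trans ?_
  rw [hprod, Complex.sub_re, Complex.sub_im, Complex.mul_re, Complex.mul_im,
    hic (g := fun ω => f ω + h ω) (hf'.add hh'),
    his (g := fun ω => f ω + h ω) (hf'.add hh'),
    hic hf', hic hh', his hf', his hh']
  simp only [Real.cos_add, Real.sin_add]
  rw [integral_sub i1 i2, integral_add i3 i4]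
  rw [abs_le] at ccc ccs csc css
  have b1 := abs_le.2 (⟨by linarith [ccc.1, css.2], by linarith [ccc.2, css.1]⟩ :
    -(8 * alphaSig P m₁ m₂) ≤ (∫ ω, Real.cos (f ω) * Real.cos (h ω) ∂P -
      ∫ ω, Real.sin (f ω) * Real.sin (h ω) ∂P) - ((∫ ω, Real.cos (f ω) ∂P) *
      (∫ ω, Real.cos (h ω) ∂P) - (∫ ω, Real.sin (f ω) ∂P) * ∫ ω, Real.sin (h ω) ∂P) ∧
      _ ≤ 8 * alphaSig P m₁ m₂)
  have b2 := abs_le.2 (⟨by linarith [ccs.1, csc.1], by linarith [ccs.2, csc.2]⟩ :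
    -(8 * alphaSig P m₁ m₂) ≤ (∫ ω, Real.sin (f ω) * Real.cos (h ω) ∂P +
      ∫ ω, Real.cos (f ω) * Real.sin (h ω) ∂P) - ((∫ ω, Real.cos (f ω) ∂P) *
      (∫ ω, Real.sin (h ω) ∂P) + (∫ ω, Real.sin (f ω) ∂P) * ∫ ω, Real.cos (h ω) ∂P) ∧
      _ ≤ 8 * alphaSig P m₁ m₂)
  linarith

/-- Asymptotic factorization of characters, up to a perturbation `H - G`. -/
lemma norm_integral_cis_add_sub_le {Ω : Type*} {m₁ m₂ : MeasurableSpace Ω}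
    [mΩ : MeasurableSpace Ω] (P : Measure Ω) [IsProbabilityMeasure P]
    (hm₁ : m₁ ≤ mΩ) (hm₂ : m₂ ≤ mΩ) {F G H : Ω → ℝ}
    (hF : Measurable[m₁] F) (hG : Measurable[m₂] G) (hH : Measurable H) :
    ‖∫ ω, cis (F ω + H ω) ∂P - (∫ ω, cis (F ω) ∂P) * ∫ ω, cis (H ω) ∂P‖
      ≤ 16 * alphaSig P m₁ m₂ + 2 * ∫ ω, ‖cis (H ω - G ω) - 1‖ ∂P := by
  have hF' : Measurable F := hF.mono hm₁ le_rfl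
  have hG' : Measurable G := hG.mono hm₂ le_rfl
  have iG := integrable_cis (Q := P) hG'
  have iH := integrable_cis (Q := P) hH
  have iFH : Integrable (fun ω => cis (F ω + H ω)) P := integrable_cis (hF'.add hH)
  have iFG : Integrable (fun ω => cis (F ω + G ω)) P := integrable_cis (hF'.add hG')
  have iD : Integrable (fun ω => ‖cis (H ω - G ω) - 1‖) P :=
    ((integrable_cis (hH.sub hG')).sub (integrable_const 1)).norm
  have e1 : ‖∫ ω, cis (F ω + H ω) ∂P - ∫ ω, cis (F ω + G ω) ∂P‖
      ≤ ∫ ω, ‖cis (H ω - G ω) - 1‖ ∂P := by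
    rw [← integral_sub iFH iFG]
    refine norm_integral_le_of_norm_le iD (Eventually.of_forall fun ω => ?_)
    rw [norm_cis_sub_cis, add_sub_add_left_eq_sub]
  have e2 : ‖(∫ ω, cis (F ω) ∂P) * ∫ ω, cis (G ω) ∂P - (∫ ω, cis (F ω) ∂P) * ∫ ω, cis (H ω) ∂P‖
      ≤ ∫ ω, ‖cis (H ω - G ω) - 1‖ ∂P := by
    rw [← mul_sub, norm_mul, norm_sub_rev, ← integral_sub iH iG]
    have h1 : ‖∫ ω, cis (F ω) ∂P‖ ≤ 1 := by
      refine (norm_integral_le_of_norm_le_const (C := 1)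
        (Eventually.of_forall fun _ => (norm_cis _).le)).trans ?_
      simp
    have h2 : ‖∫ ω, (cis (H ω) - cis (G ω)) ∂P‖ ≤ ∫ ω, ‖cis (H ω - G ω) - 1‖ ∂P :=
      norm_integral_le_of_norm_le iD (Eventually.of_forall fun ω => by rw [norm_cis_sub_cis])
    calc _ ≤ 1 * ∫ ω, ‖cis (H ω - G ω) - 1‖ ∂P := by gcongr
      _ = _ := one_mul _
  have e3 := norm_integral_cis_mul_sub_le P hm₁ hm₂ hF hG
  simp only [← cis_add] at e3
  calc _ ≤ ‖∫ ω, cis (F ω + H ω) ∂P - ∫ ω, cis (F ω + G ω) ∂P‖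
        + ‖∫ ω, cis (F ω + G ω) ∂P - (∫ ω, cis (F ω) ∂P) * ∫ ω, cis (G ω) ∂P‖
        + ‖(∫ ω, cis (F ω) ∂P) * ∫ ω, cis (G ω) ∂P
            - (∫ ω, cis (F ω) ∂P) * ∫ ω, cis (H ω) ∂P‖ := by
        refine le_trans (le_of_eq ?_) norm_add₃_le
        congr 1; ring
    _ ≤ _ := by linarith

lemma measurable_sum_iSup_comap {Ω : Type*} {d : ℕ} (X : ℕ → Ω → (Fin d → ℝ)) {s : Finset ℕ}
    {S : Set ℕ} (hs : ∀ j ∈ s, j ∈ S) :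
    Measurable[⨆ k ∈ S, MeasurableSpace.comap (X k) inferInstance]
      (fun ω => ∑ j ∈ s, X j ω) := by
  refine @Finset.measurable_fun_sum _ _ _ _ _ _
    (⨆ k ∈ S, MeasurableSpace.comap (X k) inferInstance) X s fun j hj => ?_
  exact (comap_measurable (X j)).mono
    (le_iSup₂ (f := fun k (_ : k ∈ S) => MeasurableSpace.comap (X k) inferInstance) j (hs j hj))
    le_rfl

lemma iSup_comap_le {Ω : Type*} [mΩ : MeasurableSpace Ω] {d : ℕ} {X : ℕ → Ω → (Fin d → ℝ)}
    (hX : ∀ j, Measurable (X j)) (S : Set ℕ) :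
    ⨆ k ∈ S, MeasurableSpace.comap (X k) inferInstance ≤ mΩ :=
  iSup₂_le fun k _ => (hX k).comap_le

/-- Blocks of bounded length of an infinitesimal array are negligible. -/
lemma Infinitesimal.exists_integral_norm_cis_le {Ω : Type*} [MeasurableSpace Ω] {d : ℕ}
    {P : Measure Ω} [IsProbabilityMeasure P] {A : ℕ → Matrix (Fin d) (Fin d) ℝ}
    {X : ℕ → Ω → (Fin d → ℝ)} (hX : ∀ j, Measurable (X j)) (h : Infinitesimal P A X)
    (g : ℕ) {C ε : ℝ} (hC : 0 ≤ C) (hε : 0 < ε) :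
    ∃ N, ∀ n ≥ N, ∀ s : Finset ℕ, s.card ≤ g → s ⊆ Finset.Icc 1 n →
      ∀ t : Fin d → ℝ, ‖t‖ ≤ C →
        ∫ ω, ‖cis (t ⬝ᵥ (A n *ᵥ ∑ j ∈ s, X j ω)) - 1‖ ∂P ≤ ε := by
  set η : ℝ := ε / (3 * (g + 1)) with hη
  have hηpos : 0 < η := by positivity
  obtain ⟨N, hN⟩ := h (η / (d * C + 1)) (by positivity) η hηpos
  refine ⟨N, fun n hn s hs hsn t ht => ?_⟩
  have hmeas : ∀ j, Measurable (fun ω => A n *ᵥ X j ω) := fun j =>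
    (measurable_mulVec (A n)).comp (hX j)
  have hfInt : ∀ j, Integrable (fun ω => ‖cis (t ⬝ᵥ (A n *ᵥ X j ω)) - 1‖) P := fun j =>
    ((integrable_cis ((measurable_dotProduct_left t).comp (hmeas j))).sub
      (integrable_const 1)).norm
  have hterm : ∀ j ∈ s, ∫ ω, ‖cis (t ⬝ᵥ (A n *ᵥ X j ω)) - 1‖ ∂P ≤ 3 * η := fun j hj => by
    have hj' := Finset.mem_Icc.1 (hsn hj)
    set E : Set Ω := {ω | η / (d * C + 1) ≤ ‖A n *ᵥ X j ω‖} with hE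
    have hEm : MeasurableSet E := measurableSet_le measurable_const (hmeas j).norm
    have hPE : P.real E < η := hN n hn j hj'.1 hj'.2
    have hb : ∀ ω, ‖cis (t ⬝ᵥ (A n *ᵥ X j ω)) - 1‖ ≤ η + E.indicator (fun _ => 2) ω := fun ω => by
      by_cases hω : ω ∈ E
      · rw [Set.indicator_of_mem hω]
        linarith [(norm_cis_sub_one_le (t ⬝ᵥ (A n *ᵥ X j ω))).trans (min_le_left _ _)]
      · rw [Set.indicator_of_notMem hω, add_zero]
        refine ((norm_cis_sub_one_le _).trans (min_le_right _ _)).trans ?_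
        refine (abs_dotProduct_le _ _).trans ?_
        have hlt : ‖A n *ᵥ X j ω‖ ≤ η / (d * C + 1) := (not_le.1 hω).le
        calc d * ‖t‖ * ‖A n *ᵥ X j ω‖ ≤ d * C * (η / (d * C + 1)) := by gcongr
          _ ≤ (d * C + 1) * (η / (d * C + 1)) := by gcongr; linarith
          _ = η := mul_div_cancel₀ _ (by positivity)
    calc _ ≤ ∫ ω, (η + E.indicator (fun _ => 2) ω) ∂P :=
          integral_mono (hfInt j)
            ((integrable_const _).add ((integrable_const _).indicator hEm)) hb
      _ = η + P.real E * 2 := by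
          rw [integral_add (integrable_const _) ((integrable_const _).indicator hEm),
            integral_indicator_const _ hEm]
          simp
      _ ≤ 3 * η := by linarith
  calc _ ≤ ∫ ω, ∑ j ∈ s, ‖cis (t ⬝ᵥ (A n *ᵥ X j ω)) - 1‖ ∂P := by
        refine integral_mono ?_ (integrable_finsetSum _ fun j _ => hfInt j) fun ω => ?_
        · refine ((integrable_cis ((measurable_dotProduct_left t).comp
            ((measurable_mulVec (A n)).comp (Finset.measurable_fun_sum s fun j _ => hX j)))).sub
            (integrable_const 1)).norm
        · simp only [mulVec_sum, dotProduct_sum]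
          exact norm_cis_sum_sub_one_le _ _
    _ = ∑ j ∈ s, ∫ ω, ‖cis (t ⬝ᵥ (A n *ᵥ X j ω)) - 1‖ ∂P :=
        integral_finsetSum _ fun j _ => hfInt j
    _ ≤ ∑ j ∈ s, 3 * η := Finset.sum_le_sum hterm
    _ = s.card * (3 * η) := by simp
    _ ≤ (g + 1) * (3 * η) := by
        gcongr
        exact_mod_cast hs.trans (Nat.le_succ g)
    _ = ε := by rw [hη]; field_simp

/-- The normalized partial sums `A_n S_n + b_n`. -/
def normSum {Ω : Type*} {d : ℕ} (A : ℕ → Matrix (Fin d) (Fin d) ℝ) (b : ℕ → Fin d → ℝ)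
    (X : ℕ → Ω → (Fin d → ℝ)) (n : ℕ) (ω : Ω) : Fin d → ℝ :=
  A n *ᵥ partialSum X n ω + b n

lemma measurable_partialSum {Ω : Type*} [MeasurableSpace Ω] {d : ℕ} {X : ℕ → Ω → (Fin d → ℝ)}
    (hX : ∀ j, Measurable (X j)) (n : ℕ) : Measurable (partialSum X n) :=
  Finset.measurable_fun_sum _ fun j _ => hX j

lemma measurable_normSum {Ω : Type*} [MeasurableSpace Ω] {d : ℕ} {X : ℕ → Ω → (Fin d → ℝ)}
    (hX : ∀ j, Measurable (X j)) (A : ℕ → Matrix (Fin d) (Fin d) ℝ) (b : ℕ → Fin d → ℝ) (n : ℕ) :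
    Measurable (normSum A b X n) :=
  ((measurable_mulVec (A n)).comp (measurable_partialSum hX n)).add_const _

lemma partialSum_eq_add_gap {Ω : Type*} {d : ℕ} (X : ℕ → Ω → (Fin d → ℝ)) {m n : ℕ} (hmn : m ≤ n)
    (g : ℕ) (ω : Ω) : partialSum X n ω = partialSum X m ω
      + (∑ j ∈ Finset.Ioc m (min n (m + g)), X j ω + ∑ j ∈ Finset.Ioc (m + g) n, X j ω) := by
  unfold partialSum
  have hI : ∀ k, Finset.Icc 1 k = Finset.Ioc 0 k := fun k => rfl
  rw [hI, hI]
  rcases le_total n (m + g) with h | h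
  · rw [min_eq_left h, Finset.Ioc_eq_empty_of_le h, Finset.sum_empty, add_zero,
      Finset.sum_Ioc_consecutive _ (Nat.zero_le _) hmn]
  · rw [min_eq_right h, Finset.sum_Ioc_consecutive _ (Nat.le_add_right m g) h,
      Finset.sum_Ioc_consecutive _ (Nat.zero_le _) hmn]

/-- Under strong mixing and infinitesimality, the normalized sum `Z_n` asymptotically splits as
the independent sum of `A_n A_m⁻¹ Z_m` and the remainder. -/
lemma exists_norm_cf_sub_mul_le {Ω : Type*} [MeasurableSpace Ω] {d : ℕ}
    {P : Measure Ω} [IsProbabilityMeasure P] {A : ℕ → Matrix (Fin d) (Fin d) ℝ}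
    (hA : ∀ n, IsUnit (A n)) (b : ℕ → Fin d → ℝ)
    {X : ℕ → Ω → (Fin d → ℝ)} (hX : ∀ j, Measurable (X j)) (hinf : Infinitesimal P A X)
    (hmix : StronglyMixing P X) {C ε : ℝ} (hC : 0 ≤ C) (hε : 0 < ε) :
    ∃ N, ∀ m n, N ≤ m → m ≤ n → ∀ t : Fin d → ℝ, ‖t‖ ≤ C →
      ‖cf (P.map (normSum A b X n)) t
        - cf (P.map (normSum A b X m)) (t ᵥ* (A n * (A m)⁻¹))
          * ∫ ω, cis (t ⬝ᵥ (normSum A b X n ω - (A n * (A m)⁻¹) *ᵥ normSum A b X m ω)) ∂P‖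
        ≤ ε := by
  obtain ⟨g, hg⟩ := (hmix.eventually_lt_const (show (0 : ℝ) < ε / 32 by positivity)).exists
  obtain ⟨N, hN⟩ := hinf.exists_integral_norm_cis_le hX g hC (show 0 < ε / 4 by positivity)
  refine ⟨max N 1, fun m n hm hmn t ht => ?_⟩
  have hm1 : 1 ≤ m := (le_max_right _ _).trans hm
  set B := A n * (A m)⁻¹ with hB
  have hBA : B * A m = A n := by
    rw [hB, Matrix.mul_assoc, Matrix.nonsing_inv_mul _ ((Matrix.isUnit_iff_isUnit_det _).1 (hA m)),
      Matrix.mul_one]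
  let Y : Ω → Fin d → ℝ := fun ω => ∑ j ∈ Finset.Ioc (m + g) n, X j ω
  let W : Ω → Fin d → ℝ := fun ω => ∑ j ∈ Finset.Ioc m (min n (m + g)), X j ω
  have hrem : ∀ ω, normSum A b X n ω - B *ᵥ normSum A b X m ω
      = A n *ᵥ W ω + (A n *ᵥ Y ω + (b n - B *ᵥ b m)) := fun ω => by
    simp only [normSum, partialSum_eq_add_gap X hmn g ω, mulVec_add, mulVec_mulVec, hBA]
    change _ + (A n *ᵥ W ω + A n *ᵥ Y ω) + _ - _ = _
    abel
  have hmF : Measurable[⨆ k ∈ Set.Icc 1 m, MeasurableSpace.comap (X k) inferInstance]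
      (fun ω => (t ᵥ* B) ⬝ᵥ normSum A b X m ω) :=
    (measurable_dotProduct_left (t ᵥ* B)).comp
      ((((measurable_mulVec (A m)).add_const (b m))).comp
        (measurable_sum_iSup_comap X fun j hj => Finset.mem_Icc.1 hj))
  have hmG : Measurable[⨆ k ∈ Set.Ici (m + g), MeasurableSpace.comap (X k) inferInstance]
      (fun ω => t ⬝ᵥ (A n *ᵥ Y ω + (b n - B *ᵥ b m))) :=
    (measurable_dotProduct_left t).comp
      ((((measurable_mulVec (A n)).add_const (b n - B *ᵥ b m))).comp
        (measurable_sum_iSup_comap X fun j hj => (Finset.mem_Ioc.1 hj).1.le))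
  have hmH : Measurable (fun ω => t ⬝ᵥ (normSum A b X n ω - B *ᵥ normSum A b X m ω)) :=
    (measurable_dotProduct_left t).comp ((measurable_normSum hX A b n).sub
      ((measurable_mulVec B).comp (measurable_normSum hX A b m)))
  have key := norm_integral_cis_add_sub_le P (iSup_comap_le hX _) (iSup_comap_le hX _) hmF hmG hmH
  have hgap : ∫ ω, ‖cis (t ⬝ᵥ (normSum A b X n ω - B *ᵥ normSum A b X m ω)
      - t ⬝ᵥ (A n *ᵥ Y ω + (b n - B *ᵥ b m))) - 1‖ ∂P ≤ ε / 4 := by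
    simp only [hrem, ← dotProduct_sub, add_sub_cancel_right]
    refine hN n ((le_max_left _ _).trans (hm.trans hmn)) _ ?_ ?_ t ht
    · simp only [Nat.card_Ioc]; omega
    · intro j hj
      simp only [Finset.mem_Ioc, Finset.mem_Icc] at hj ⊢
      omega
  have hsum : ∀ ω, (t ᵥ* B) ⬝ᵥ normSum A b X m ω
      + t ⬝ᵥ (normSum A b X n ω - B *ᵥ normSum A b X m ω) = t ⬝ᵥ normSum A b X n ω := fun ω => by
    rw [← dotProduct_mulVec, ← dotProduct_add, add_sub_cancel]
  rw [cf_map P (measurable_normSum hX A b n), cf_map P (measurable_normSum hX A b m)]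
  simp only [hsum] at key
  have hα := alphaSig_le_alphaMix P X g hm1
  linarith

instance isProbabilityMeasure_map_normSum {Ω : Type*} [MeasurableSpace Ω] {d : ℕ}
    {P : Measure Ω} [IsProbabilityMeasure P] (A : ℕ → Matrix (Fin d) (Fin d) ℝ)
    (b : ℕ → Fin d → ℝ) (X : ℕ → Ω → (Fin d → ℝ)) [hX : Fact (∀ j, Measurable (X j))] (n : ℕ) :
    IsProbabilityMeasure (P.map (normSum A b X n)) :=
  Measure.isProbabilityMeasure_map (measurable_normSum hX.out A b n).aemeasurable

lemma cf_zero {d : ℕ} (μ : Measure (Fin d → ℝ)) [IsProbabilityMeasure μ] : cf μ 0 = 1 := by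
  simp [cf, cis]

/-- Characteristic functions determine finite measures. -/
lemma ext_of_cf {d : ℕ} {μ ν : Measure (Fin d → ℝ)} [IsFiniteMeasure μ] [IsFiniteMeasure ν]
    (h : ∀ t, cf μ t = cf ν t) : μ = ν := by
  refine Measure.ext_of_charFunDual (funext fun L => ?_)
  have hL : ∀ x, L x = (fun i => L (Pi.single i 1)) ⬝ᵥ x := fun x => by
    conv_lhs => rw [← Finset.univ_sum_single x]
    rw [map_sum, dotProduct]
    refine Finset.sum_congr rfl fun i _ => ?_
    rw [← mul_one (x i), ← smul_eq_mul, Pi.single_smul, map_smul]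
    simp [mul_comm]
  generalize (fun i => L (Pi.single i 1)) = t at hL
  have hcis : ∀ x, Complex.exp (L x * Complex.I) = cis (t ⬝ᵥ x) := fun x => by rw [hL x]; rfl
  simp only [charFunDual_apply, hcis]
  exact h t

lemma cf_mconv {d : ℕ} (μ ν : Measure (Fin d → ℝ)) [IsFiniteMeasure μ] [IsFiniteMeasure ν]
    (t : Fin d → ℝ) : cf (mconv μ ν) t = cf μ t * cf ν t := by
  rw [mconv, cf_map (Y := fun p : (Fin d → ℝ) × (Fin d → ℝ) => p.1 + p.2) _
    (measurable_fst.add measurable_snd)]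
  simp only [dotProduct_add, cis_add]
  exact integral_prod_mul (fun x => cis (t ⬝ᵥ x)) (fun y => cis (t ⬝ᵥ y))

lemma mem_urbanikD_of_cf {d : ℕ} {μ ν : Measure (Fin d → ℝ)} [IsProbabilityMeasure μ]
    [hν : IsProbabilityMeasure ν] {K : Matrix (Fin d) (Fin d) ℝ}
    (h : ∀ t, cf μ t = cf μ (t ᵥ* K) * cf ν t) : K ∈ UrbanikD μ := by
  have : IsProbabilityMeasure (μ.map K.mulVec) :=
    Measure.isProbabilityMeasure_map (measurable_mulVec K).aemeasurable
  have : IsFiniteMeasure (mconv (μ.map K.mulVec) ν) := by unfold mconv; infer_instance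
  refine ⟨ν, hν, ext_of_cf fun t => ?_⟩
  rw [cf_mconv, cf_map _ (measurable_mulVec K), h]
  simp only [dotProduct_mulVec, cf]

lemma tendsto_cf_sub_mul {Ω : Type*} [MeasurableSpace Ω] {d : ℕ}
    {P : Measure Ω} [IsProbabilityMeasure P] {A : ℕ → Matrix (Fin d) (Fin d) ℝ}
    (hA : ∀ n, IsUnit (A n)) (b : ℕ → Fin d → ℝ)
    {X : ℕ → Ω → (Fin d → ℝ)} (hX : ∀ j, Measurable (X j)) (hinf : Infinitesimal P A X)
    (hmix : StronglyMixing P X) {m n : ℕ → ℕ} (hm : Tendsto m atTop atTop)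
    (hmn : ∀ k, m k ≤ n k) {t : ℕ → Fin d → ℝ} {C : ℝ} (ht : ∀ᶠ k in atTop, ‖t k‖ ≤ C) :
    Tendsto (fun k => cf (P.map (normSum A b X (n k))) (t k)
      - cf (P.map (normSum A b X (m k))) (t k ᵥ* (A (n k) * (A (m k))⁻¹))
        * ∫ ω, cis (t k ⬝ᵥ (normSum A b X (n k) ω
            - (A (n k) * (A (m k))⁻¹) *ᵥ normSum A b X (m k) ω)) ∂P) atTop (𝓝 0) := by
  have hC : 0 ≤ C := by
    obtain ⟨k, hk⟩ := ht.exists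
    exact (norm_nonneg _).trans hk
  rw [Metric.tendsto_nhds]
  intro ε hε
  obtain ⟨N, hN⟩ := exists_norm_cf_sub_mul_le hA b hX hinf hmix hC (half_pos hε)
  filter_upwards [hm.eventually_ge_atTop N, ht] with k hk hkt
  rw [dist_zero_right]
  exact (hN _ _ hk (hmn k) _ hkt).trans_lt (half_lt_self hε)

/-- Limits of `A_n A_m⁻¹` belong to the decomposability semigroup of the limit law. -/
lemma mem_urbanikD_of_tendsto {Ω : Type*} [MeasurableSpace Ω] {d : ℕ}
    {P : Measure Ω} [IsProbabilityMeasure P] {A : ℕ → Matrix (Fin d) (Fin d) ℝ}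
    (hA : ∀ n, IsUnit (A n)) {b : ℕ → Fin d → ℝ}
    {X : ℕ → Ω → (Fin d → ℝ)} (hX : ∀ j, Measurable (X j)) (hinf : Infinitesimal P A X)
    (hmix : StronglyMixing P X) {μ : Measure (Fin d → ℝ)} [IsProbabilityMeasure μ]
    (hconv : WeakLim (fun n => P.map (normSum A b X n)) μ)
    {m n : ℕ → ℕ} (hm : Tendsto m atTop atTop) (hmn : ∀ k, m k ≤ n k)
    {K : Matrix (Fin d) (Fin d) ℝ}
    (hK : Tendsto (fun k => A (n k) * (A (m k))⁻¹) atTop (𝓝 K)) : K ∈ UrbanikD μ := by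
  have : Fact (∀ j, Measurable (X j)) := ⟨hX⟩
  have hn : Tendsto n atTop atTop := tendsto_atTop_mono hmn hm
  let V : ℕ → Ω → Fin d → ℝ := fun k ω =>
    normSum A b X (n k) ω - (A (n k) * (A (m k))⁻¹) *ᵥ normSum A b X (m k) ω
  have hV : ∀ k, Measurable (V k) := fun k => (measurable_normSum hX A b _).sub
    ((measurable_mulVec _).comp (measurable_normSum hX A b _))
  let ν : ℕ → ProbabilityMeasure (Fin d → ℝ) := fun k =>
    ⟨P.map (V k), Measure.isProbabilityMeasure_map (hV k).aemeasurable⟩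
  have htight : IsTightMeasureSet
      {((ρ : ProbabilityMeasure (Fin d → ℝ)) : Measure (Fin d → ℝ)) | ρ ∈ Set.range ν} := by
    have hZ := isTightMeasureSet_of_isCompact_closure
      (hconv.tendsto_probabilityMeasure.isCompact_insert_range.closure_of_subset
        (Set.subset_insert _ _))
    rw [isTightMeasureSet_iff_exists_isCompact_measure_compl_le] at hZ ⊢
    intro ε hε
    obtain ⟨Q, hQ, hQε⟩ := hZ (ε / 2) (ENNReal.half_pos hε.ne')
    have hBc := hK.isCompact_insert_range
    refine ⟨(fun p : ((Fin d → ℝ) × (Fin d → ℝ)) × Matrix (Fin d) (Fin d) ℝ =>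
      p.1.1 - p.2 *ᵥ p.1.2) '' ((Q ×ˢ Q) ×ˢ
        insert K (Set.range fun k => A (n k) * (A (m k))⁻¹)), ?_, ?_⟩
    · exact ((hQ.prod hQ).prod hBc).image (by fun_prop)
    · rintro _ ⟨_, ⟨k, rfl⟩, rfl⟩
      have hQm := hQ.measurableSet
      have hZk : ∀ j, P (normSum A b X j ⁻¹' Qᶜ) ≤ ε / 2 := fun j => by
        rw [← Measure.map_apply (measurable_normSum hX A b j) hQm.compl]
        exact hQε _ ⟨_, ⟨j, rfl⟩, rfl⟩
      refine (Measure.map_apply (hV k) ?_).trans_le ?_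
      · exact ((((hQ.prod hQ).prod hBc).image (by fun_prop)).measurableSet).compl
      · calc _ ≤ P (normSum A b X (n k) ⁻¹' Qᶜ ∪ normSum A b X (m k) ⁻¹' Qᶜ) := by
              refine measure_mono fun ω hω => ?_
              by_contra hcon
              simp only [Set.mem_union, Set.mem_preimage, Set.mem_compl_iff, not_or,
                not_not] at hcon
              exact hω ⟨((_, _), _), ⟨⟨hcon.1, hcon.2⟩, Set.mem_insert_of_mem _ ⟨k, rfl⟩⟩, rfl⟩
          _ ≤ _ := measure_union_le _ _
          _ ≤ ε / 2 + ε / 2 := add_le_add (hZk _) (hZk _)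
          _ = ε := ENNReal.add_halves ε
  let U : Ultrafilter ℕ := Ultrafilter.of atTop
  have hU : (U : Filter ℕ) ≤ atTop := Ultrafilter.of_le atTop
  obtain ⟨ν₀, -, hν₀⟩ := (isCompact_closure_of_isTightMeasureSet htight).ultrafilter_le_nhds
    (U.map ν) (.trans (by simp) (monotone_principal subset_closure))
  have hν₀' : Tendsto ν U (𝓝 ν₀) := hν₀
  refine mem_urbanikD_of_cf (ν := ν₀) fun t => ?_
  have h1 := (tendsto_cf_sub_mul hA b hX hinf hmix hm hmn (t := fun _ => t) (C := ‖t‖)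
    (Eventually.of_forall fun _ => le_rfl)).mono_left hU
  have h2 := ((hconv.comp hn).tendsto_cf (tendsto_const_nhds (x := t))).mono_left hU
  have h3 := ((hconv.comp hm).tendsto_cf
    (((continuous_const.matrix_vecMul continuous_id).tendsto K).comp hK : Tendsto
      (fun k => t ᵥ* (A (n k) * (A (m k))⁻¹)) atTop (𝓝 (t ᵥ* K)))).mono_left hU
  have h4 := tendsto_cf_of_tendsto hν₀' t
  have h5 := h2.sub (h3.mul h4)
  refine sub_eq_zero.1 (tendsto_nhds_unique h5 (h1.congr fun k => ?_))
  simp only [ν, ProbabilityMeasure.coe_mk, cf_map P (hV k), V]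
  rfl

/-- The matrices `A_n A_m⁻¹`, `m ≤ n`, are bounded for large `m`. -/
lemma exists_norm_row_le {Ω : Type*} [MeasurableSpace Ω] {d : ℕ}
    {P : Measure Ω} [IsProbabilityMeasure P] {A : ℕ → Matrix (Fin d) (Fin d) ℝ}
    (hA : ∀ n, IsUnit (A n)) {b : ℕ → Fin d → ℝ}
    {X : ℕ → Ω → (Fin d → ℝ)} (hX : ∀ j, Measurable (X j)) (hinf : Infinitesimal P A X)
    (hmix : StronglyMixing P X) {μ : Measure (Fin d → ℝ)} [IsProbabilityMeasure μ]
    (hfull : IsFull μ) (hconv : WeakLim (fun n => P.map (normSum A b X n)) μ) :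
    ∃ N : ℕ, ∀ m n, N ≤ m → m ≤ n → ∀ i, ‖(A n * (A m)⁻¹) i‖ ≤ N := by
  have : Fact (∀ j, Measurable (X j)) := ⟨hX⟩
  by_contra! hcon
  choose m n hkm hmn i hi using hcon
  have hm : Tendsto m atTop atTop := tendsto_atTop_mono hkm tendsto_id
  have hn : Tendsto n atTop atTop := tendsto_atTop_mono hmn hm
  let v : ℕ → Fin d → ℝ := fun k => (A (n k) * (A (m k))⁻¹) (i k)
  have hvpos : ∀ k, 0 < ‖v k‖ := fun k => (Nat.cast_nonneg k).trans_lt (hi k)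
  have hvlim : Tendsto (fun k => ‖v k‖) atTop atTop :=
    tendsto_atTop_mono (fun k => (hi k).le) tendsto_natCast_atTop_atTop
  refine (hconv.comp hm).false_of_tendsto_norm_cf_one
    (fun w hw => hfull.exists_norm_cf_ne_one hw) (u := fun k => ‖v k‖⁻¹ • v k)
    (fun k => by rw [norm_smul, norm_inv, norm_norm, inv_mul_cancel₀ (hvpos k).ne']) fun r => ?_
  let t : ℕ → Fin d → ℝ := fun k => (r * ‖v k‖⁻¹) • Pi.single (i k) 1
  have ht0 : Tendsto t atTop (𝓝 0) := by
    refine squeeze_zero_norm (a := fun k => |r| * ‖v k‖⁻¹) (fun k => ?_) ?_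
    · simp [t, norm_smul, Pi.norm_single]
    · simpa using (tendsto_inv_atTop_zero.comp hvlim).const_mul |r|
  have htv : ∀ k, t k ᵥ* (A (n k) * (A (m k))⁻¹) = r • ‖v k‖⁻¹ • v k := fun k => by
    simp only [t, smul_vecMul, single_one_vecMul, smul_smul]
    rfl
  have htb : ∀ᶠ k in atTop, ‖t k‖ ≤ 1 := by
    simpa using (ht0.norm.eventually_le_const (show ‖(0 : Fin d → ℝ)‖ < 1 by simp))
  have h1 := tendsto_cf_sub_mul hA b hX hinf hmix hm hmn htb
  have h2 := (hconv.comp hn).tendsto_cf ht0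
  have h3 := (h2.sub h1).norm
  rw [cf_zero, sub_zero, norm_one] at h3
  refine tendsto_of_tendsto_of_tendsto_of_le_of_le h3 tendsto_const_nhds (fun k => ?_)
    fun k => norm_cf_le_one _ _
  simp only [sub_sub_cancel, htv, norm_mul]
  refine mul_le_of_le_one_right (norm_nonneg _) ?_
  refine (norm_integral_le_of_norm_le_const (C := 1)
    (Eventually.of_forall fun _ => (norm_cis _).le)).trans ?_
  simp

lemma norm_cf_map_normSum {Ω : Type*} [MeasurableSpace Ω] {d : ℕ} (P : Measure Ω)
    (A : ℕ → Matrix (Fin d) (Fin d) ℝ) (b : ℕ → Fin d → ℝ)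
    {X : ℕ → Ω → (Fin d → ℝ)} (hX : ∀ j, Measurable (X j)) (n : ℕ) (t : Fin d → ℝ) :
    ‖cf (P.map (normSum A b X n)) t‖ = ‖cf (P.map (partialSum X n)) (t ᵥ* A n)‖ := by
  rw [cf_map P (measurable_normSum hX A b n), cf_map P (measurable_partialSum hX n)]
  simp only [normSum, dotProduct_add, cis_add, dotProduct_mulVec]
  rw [integral_mul_const, norm_mul, norm_cis, mul_one]

/-- Some partial sum is nondegenerate in every direction. -/
lemma exists_partialSum_nondegenerate {Ω : Type*} [MeasurableSpace Ω] {d : ℕ}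
    {P : Measure Ω} [IsProbabilityMeasure P] {A : ℕ → Matrix (Fin d) (Fin d) ℝ}
    (hA : ∀ n, IsUnit (A n)) {b : ℕ → Fin d → ℝ}
    {X : ℕ → Ω → (Fin d → ℝ)} (hX : ∀ j, Measurable (X j))
    {μ : Measure (Fin d → ℝ)} [IsProbabilityMeasure μ]
    (hfull : IsFull μ) (hconv : WeakLim (fun n => P.map (normSum A b X n)) μ) :
    ∃ M, ∀ v : Fin d → ℝ, v ≠ 0 → ∃ r : ℝ, ‖cf (P.map (partialSum X M)) (r • v)‖ ≠ 1 := by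
  have : Fact (∀ j, Measurable (X j)) := ⟨hX⟩
  by_contra! hcon
  choose v hv0 hv using hcon
  let w : ℕ → Fin d → ℝ := fun n => v n ᵥ* (A n)⁻¹
  have hw : ∀ n, w n ᵥ* A n = v n := fun n => by
    simp only [w, vecMul_vecMul]
    rw [Matrix.nonsing_inv_mul _ ((Matrix.isUnit_iff_isUnit_det _).1 (hA n)), vecMul_one]
  have hwpos : ∀ n, 0 < ‖w n‖ := fun n => norm_pos_iff.2 fun h0 => hv0 n (by
    rw [← hw n, h0, zero_vecMul])
  refine hconv.false_of_tendsto_norm_cf_one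
    (fun w hw => hfull.exists_norm_cf_ne_one hw) (u := fun k => ‖w k‖⁻¹ • w k)
    (fun k => by rw [norm_smul, norm_inv, norm_norm, inv_mul_cancel₀ (hwpos k).ne']) fun r => ?_
  refine tendsto_const_nhds.congr fun k => ?_
  rw [norm_cf_map_normSum P A b hX, smul_smul, smul_vecMul, hw, hv]

/-- The norming matrices tend to zero. -/
lemma tendsto_normingMatrix_zero {Ω : Type*} [MeasurableSpace Ω] {d : ℕ}
    {P : Measure Ω} [IsProbabilityMeasure P] {A : ℕ → Matrix (Fin d) (Fin d) ℝ}
    (hA : ∀ n, IsUnit (A n)) {b : ℕ → Fin d → ℝ}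
    {X : ℕ → Ω → (Fin d → ℝ)} (hX : ∀ j, Measurable (X j)) (hinf : Infinitesimal P A X)
    {μ : Measure (Fin d → ℝ)} [IsProbabilityMeasure μ]
    (hfull : IsFull μ) (hconv : WeakLim (fun n => P.map (normSum A b X n)) μ) :
    Tendsto A atTop (𝓝 0) := by
  obtain ⟨M, hM⟩ := exists_partialSum_nondegenerate hA hX hfull hconv
  have hprob : IsProbabilityMeasure (P.map (partialSum X M)) :=
    Measure.isProbabilityMeasure_map (measurable_partialSum hX M).aemeasurable
  refine tendsto_pi_nhds.2 fun i => ?_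
  by_contra hcon
  rw [Metric.tendsto_atTop] at hcon
  push Not at hcon
  obtain ⟨ε, hε, hcon⟩ := hcon
  choose n hn hnε using hcon
  replace hnε : ∀ k, ε ≤ ‖A (n k) i‖ := fun k => by
    have := hnε k
    rwa [show (0 : Matrix (Fin d) (Fin d) ℝ) i = 0 from rfl, dist_zero_right] at this
  have hpos : ∀ k, 0 < ‖A (n k) i‖ := fun k => hε.trans_le (hnε k)
  refine WeakLim.false_of_tendsto_norm_cf_one (ρs := fun _ => P.map (partialSum X M))
    (fun f => tendsto_const_nhds) hM (u := fun k => ‖A (n k) i‖⁻¹ • A (n k) i)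
    (fun k => by rw [norm_smul, norm_inv, norm_norm, inv_mul_cancel₀ (hpos k).ne']) fun r => ?_
  suffices h : Tendsto (fun k => cf (P.map (partialSum X M)) (r • ‖A (n k) i‖⁻¹ • A (n k) i))
      atTop (𝓝 1) by simpa using h.norm
  rw [Metric.tendsto_nhds]
  intro η hη
  obtain ⟨N, hN⟩ := hinf.exists_integral_norm_cis_le hX M
    (show 0 ≤ |r| * ε⁻¹ by positivity) (half_pos hη)
  filter_upwards [eventually_ge_atTop N, eventually_ge_atTop M] with k hkN hkM
  have ht : ‖(r * ‖A (n k) i‖⁻¹) • (Pi.single i 1 : Fin d → ℝ)‖ ≤ |r| * ε⁻¹ := by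
    simp only [norm_smul, norm_mul, norm_inv, Pi.norm_single, norm_one, mul_one,
      Real.norm_eq_abs, abs_norm]
    gcongr
    exact hnε k
  have key := hN (n k) (hkN.trans (hn k)) (Finset.Icc 1 M) (by simp)
    (Finset.Icc_subset_Icc_right (hkM.trans (hn k))) _ ht
  have hrow : ((r * ‖A (n k) i‖⁻¹) • (Pi.single i 1 : Fin d → ℝ)) ᵥ* A (n k)
      = r • ‖A (n k) i‖⁻¹ • A (n k) i := by
    simp only [smul_vecMul, single_one_vecMul, smul_smul]
    rfl
  simp only [dotProduct_mulVec, hrow] at key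
  rw [dist_eq_norm, cf_map P (measurable_partialSum hX M)]
  have hi : Integrable (fun ω => cis ((r • ‖A (n k) i‖⁻¹ • A (n k) i) ⬝ᵥ partialSum X M ω)) P :=
    integrable_cis (Q := P) ((measurable_dotProduct_left
    (r • ‖A (n k) i‖⁻¹ • A (n k) i)).comp (measurable_partialSum hX M))
  have h1 : (1 : ℂ) = ∫ _, (1 : ℂ) ∂P := by simp
  conv_lhs => rw [h1]
  rw [← integral_sub hi (integrable_const _)]
  exact ((norm_integral_le_integral_norm _).trans key).trans_lt (half_lt_self hη)

lemma continuous_detJ {d : ℕ} (J : Matrix (Fin d) (Fin d) ℝ) : Continuous (detJ J) := by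
  let p := LinearMap.range J.mulVecLin
  let e := Module.finBasis ℝ p
  have h : ∀ A, detJ J A = (Matrix.of fun i j =>
      e.repr ⟨(J * A * J) *ᵥ (e j : Fin d → ℝ), ⟨(A * J) *ᵥ (e j : Fin d → ℝ), by
        simp [Matrix.mul_assoc]⟩⟩ i).det := fun A => by
    unfold detJ
    rw [← LinearMap.det_toMatrix e]
    congr 1
    ext i j
    rw [LinearMap.toMatrix_apply]
    rfl
  rw [funext h]
  refine Continuous.matrix_det (continuous_matrix fun i j => ?_)
  refine ((e.coord i).continuous_of_finiteDimensional).comp (Continuous.subtype_mk ?_ _)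
  fun_prop

lemma detJ_one {d : ℕ} {J : Matrix (Fin d) (Fin d) ℝ} (hJ : J * J = J) : detJ J 1 = 1 := by
  unfold detJ
  convert LinearMap.det_id
  ext ⟨x, y, rfl⟩ : 2
  simp [hJ]

lemma detJ_zero {d : ℕ} {J : Matrix (Fin d) (Fin d) ℝ} (hJ : J ≠ 0) : detJ J 0 = 0 := by
  unfold detJ
  have hne : Nontrivial (LinearMap.range J.mulVecLin) := by
    rw [Submodule.nontrivial_iff_ne_bot, Ne, LinearMap.range_eq_bot]
    exact fun h => hJ (Matrix.toLin'.injective (by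
      rw [map_zero, Matrix.toLin'_apply']
      exact h))
  convert LinearMap.det_zero' (M := LinearMap.range J.mulVecLin) (Module.finBasis ℝ _)
  · ext ⟨x, y, rfl⟩ : 2
    simp
  · exact Fin.pos_iff_nonempty.1 Module.finrank_pos

/-- **Lemma 2.** Under strong mixing, infinitesimality, weak convergence to a full law,
with invertible `A_n` satisfying `A_{n+1} A_n⁻¹ → I`: for every nonzero idempotent
`J ∈ D(μ)` and every `0 < c < 1` there is `K_c ∈ D(μ)` with `det_J K_c = c`. -/
theorem exists_detJ_eq
    {d : ℕ} {Ω : Type*} [MeasurableSpace Ω] (P : Measure Ω) [IsProbabilityMeasure P]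
    (X : ℕ → Ω → (Fin d → ℝ)) (hXmeas : ∀ j, Measurable (X j))
    (A : ℕ → Matrix (Fin d) (Fin d) ℝ) (hAinv : ∀ n, IsUnit (A n)) (b : ℕ → Fin d → ℝ)
    (hArat : Tendsto (fun n => A (n + 1) * (A n)⁻¹) atTop (𝓝 1))
    (μ : Measure (Fin d → ℝ)) [IsProbabilityMeasure μ] (hfull : IsFull μ)
    (hmix : StronglyMixing P X)
    (hinf : Infinitesimal P A X)
    (hconv : WeakLim (fun n => P.map (fun ω => (A n).mulVec (partialSum X n ω) + b n)) μ) :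
    ∀ J ∈ UrbanikD μ, J ≠ 0 → J * J = J →
      ∀ c : ℝ, 0 < c → c < 1 → ∃ K ∈ UrbanikD μ, detJ J K = c := by
  intro J _ hJ0 hJJ c hc0 hc1
  replace hconv : WeakLim (fun n => P.map (normSum A b X n)) μ := hconv
  have hAzero := tendsto_normingMatrix_zero hAinv hXmeas hinf hfull hconv
  have hdet : ∀ n, IsUnit (A n).det := fun n => (Matrix.isUnit_iff_isUnit_det _).1 (hAinv n)
  have hcross : ∀ k : ℕ, ∃ m n, k ≤ m ∧ m + 1 ≤ n ∧ detJ J (A n * (A m)⁻¹) ≤ c ∧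
      c < detJ J (A n * (A (m + 1))⁻¹) := fun k => by
    have hlim : Tendsto (fun n => detJ J (A n * (A k)⁻¹)) atTop (𝓝 0) := by
      have := ((continuous_detJ J).tendsto _).comp (hAzero.mul_const (A k)⁻¹)
      rwa [zero_mul, detJ_zero hJ0] at this
    obtain ⟨n, hn, hkn⟩ := ((hlim.eventually_lt_const hc0).and (eventually_ge_atTop k)).exists
    by_contra! hcon
    have hall : ∀ m, k ≤ m → m ≤ n → detJ J (A n * (A m)⁻¹) ≤ c := by
      intro m hkm
      induction m, hkm using Nat.le_induction with
      | base => exact fun _ => hn.le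
      | succ m hkm ih => exact fun hmn => hcon m n hkm hmn (ih (Nat.le_of_succ_le hmn))
    have := hall n hkn le_rfl
    rw [Matrix.mul_nonsing_inv _ (hdet n), detJ_one hJJ] at this
    linarith
  choose m n hkm hmn hle hlt using hcross
  have hm : Tendsto m atTop atTop := tendsto_atTop_mono hkm tendsto_id
  obtain ⟨N, hN⟩ := exists_norm_row_le hAinv hXmeas hinf hmix hfull hconv
  let B : ℕ → Matrix (Fin d) (Fin d) ℝ := fun k => A (n k) * (A (m k + 1))⁻¹
  let S : Set (Matrix (Fin d) (Fin d) ℝ) :=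
    Set.univ.pi fun _ => Metric.closedBall (0 : Fin d → ℝ) N
  have hS : IsCompact S := isCompact_univ_pi fun _ => isCompact_closedBall _ _
  have hBS : ∀ k, B (k + N) ∈ S := fun k i _ => by
    rw [mem_closedBall_zero_iff]
    exact hN _ _ ((Nat.le_add_left N k).trans ((hkm _).trans (Nat.le_succ _))) (hmn _) i
  have : FirstCountableTopology (Matrix (Fin d) (Fin d) ℝ) :=
    inferInstanceAs (FirstCountableTopology (Fin d → Fin d → ℝ))
  obtain ⟨K, -, φ, hφ, hK⟩ := hS.tendsto_subseq hBS
  let ψ : ℕ → ℕ := fun k => φ k + N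
  have hψ : Tendsto ψ atTop atTop :=
    tendsto_atTop_mono (fun k => Nat.le_add_right _ N) hφ.tendsto_atTop
  have hK' : Tendsto (fun k => A (n (ψ k)) * (A (m (ψ k)))⁻¹) atTop (𝓝 K) := by
    have h := Tendsto.mul hK (hArat.comp (hm.comp hψ))
    rw [mul_one] at h
    refine h.congr fun k => ?_
    change A (n (ψ k)) * (A (m (ψ k) + 1))⁻¹ * (A (m (ψ k) + 1) * (A (m (ψ k)))⁻¹) = _
    rw [Matrix.mul_assoc, Matrix.nonsing_inv_mul_cancel_left _ _ (hdet _)]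
  refine ⟨K, mem_urbanikD_of_tendsto hAinv hXmeas hinf hmix hconv (hm.comp hψ)
    (fun k => (Nat.le_succ _).trans (hmn _)) hK', le_antisymm ?_ ?_⟩
  · exact le_of_tendsto' (((continuous_detJ J).tendsto K).comp hK') fun k => hle _
  · exact ge_of_tendsto' (((continuous_detJ J).tendsto K).comp hK) fun k => (hlt _).le
end

section
/- Let (b_{m,n}) be a doubly indexed family of real numbers defined for integers 1 ≤ n ≤ m, satisfying: b_{n,n} = 1 for every n; for each fixed n, b_{m,n} → 0 as m → ∞; and sup_{1≤n≤m} |b_{m+1,n} − b_{m,n}| → 0 as m → ∞. Then for every c with 0 < c < 1, the integer m_n := max{k ≥ n : b_{k,n} ≥ c} is well defined for each n (the set is nonempty and bounded above), and b_{m_n, n} → c as n → ∞. -/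
open Filter Topology

/-- For a doubly indexed array `(b_{m,n})_{1 ≤ n ≤ m}` with `b_{n,n} = 1`,
`b_{m,n} → 0` as `m → ∞` for each fixed `n`, and
`sup_{1 ≤ n ≤ m} |b_{m+1,n} - b_{m,n}| → 0`: for `0 < c < 1` the index
`m_n := max {k ≥ n : b_{k,n} ≥ c}` is well defined and `b_{m_n,n} → c` as `n → ∞`. -/
theorem crossing_index_tendsto
    (b : ℕ → ℕ → ℝ)
    (hdiag : ∀ n, 1 ≤ n → b n n = 1)
    (hlim : ∀ n, 1 ≤ n → Tendsto (fun m => b m n) atTop (𝓝 0))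
    (hunif : ∀ ε > (0 : ℝ), ∃ M : ℕ, ∀ m ≥ M, ∀ n, 1 ≤ n → n ≤ m →
      |b (m + 1) n - b m n| < ε)
    (c : ℝ) (hc0 : 0 < c) (hc1 : c < 1) :
    (∀ n, 1 ≤ n →
        ({k | n ≤ k ∧ c ≤ b k n}.Nonempty ∧ BddAbove {k | n ≤ k ∧ c ≤ b k n})) ∧
      Tendsto (fun n => b (sSup {k | n ≤ k ∧ c ≤ b k n}) n) atTop (𝓝 c) := by
  have hset : ∀ n, 1 ≤ n →
      ({k | n ≤ k ∧ c ≤ b k n}.Nonempty ∧ BddAbove {k | n ≤ k ∧ c ≤ b k n}) := by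
    intro n hn
    refine ⟨⟨n, le_rfl, by rw [hdiag n hn]; exact hc1.le⟩, ?_⟩
    obtain ⟨N, hN⟩ := eventually_atTop.1 ((hlim n hn).eventually_lt_const hc0)
    refine ⟨N, fun k hk => ?_⟩
    by_contra! hlt
    exact absurd (hN k hlt.le) (not_lt.2 hk.2)
  refine ⟨hset, Metric.tendsto_atTop.2 fun ε hε => ?_⟩
  obtain ⟨M, hM⟩ := hunif ε hε
  refine ⟨max M 1, fun n hn => ?_⟩
  have hn1 : 1 ≤ n := (le_max_right M 1).trans hn
  obtain ⟨hne, hbdd⟩ := hset n hn1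
  obtain ⟨hle, hge⟩ := Nat.sSup_mem hne hbdd
  set m := sSup {k | n ≤ k ∧ c ≤ b k n}
  have hlt : b (m + 1) n < c := by
    by_contra! h
    exact absurd (le_csSup hbdd ⟨hle.trans m.le_succ, h⟩) (Nat.not_succ_le_self m)
  have hstep := abs_lt.1 (hM m (((le_max_left M 1).trans hn).trans hle) n hn1 hle)
  rw [Real.dist_eq, abs_lt]
  constructor <;> linarith [hstep.1]
end
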